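/- Let A be a ring. Let (U_i, V_i)_{i ∈ I} and (U'_j, V'_j)_{j ∈ J} be two families of pairs of matrices over A, where each U has size m × n and the corresponding V has size p × m (sizes depending on the index). Suppose that the class of right A-modules defined by (U_i, V_i)_{i ∈ I} is contained in the class of right A-modules defined by (U'_j, V'_j)_{j ∈ J}, i.e. every right A-module M satisfying [for all i ∈ I and all x ∈ M^{m_i}, x U_i = 0 implies x = y V_i for some y ∈ M^{p_i}] also satisfies the corresponding condition for all (U'_j, V'_j). Then the class of left A-modules defined by the swapped family (V_i, U_i)_{i ∈ I} is contained in the class of left A-modules defined by (V'_j, U'_j)_{j ∈ J}: every left A-module N satisfying [for all i ∈ I and all x ∈ N^{m_i}, V_i x = 0 implies x = U_i y for some y ∈ N^{n_i}] also satisfies the corresponding condition for all (V'_j, U'_j). -/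

import Mathlib

/-!
The condition cut out by a pair `(U, V)` on a right module says that the kernel of `x ↦ xU` lies in
the range of `y ↦ yV`. Since `ℚ ⧸ ℤ` is an injective cogenerator of abelian groups, passing to
character modules reverses arrows and turns `ker g ≤ range f` into the equivalent condition
`ker f⋆ ≤ range g⋆`. As `N ↦ N⋆` turns left multiplication by a matrix into right multiplication
by the same matrix, a left module `N` satisfies the condition of `(V, U)` if and only if the right
module `N⋆` satisfies the condition of `(U, V)`, so it suffices to apply the hypothesis to `N⋆`.
-/

open MulOpposite

universe u

/-- `xU` for a row vector `x` over a right `A`-module `M` and matrix `U` over `A`: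
`(xU)_j = ∑ i, x i · U i j` using the right scalar action. -/
def vecMulMat {A : Type u} [Ring A] {M : Type*} [AddCommGroup M] [Module Aᵐᵒᵖ M]
    {m n : ℕ} (x : Fin m → M) (U : Matrix (Fin m) (Fin n) A) : Fin n → M :=
  fun j => ∑ i, op (U i j) • x i

/-- `Vx` for a column vector `x` over a left `A`-module `N` and matrix `V` over `A`:
`(Vx)_k = ∑ i, V k i • x i` using the left scalar action. -/
def matVecMul {A : Type u} [Ring A] {N : Type*} [AddCommGroup N] [Module A N]
    {p m : ℕ} (V : Matrix (Fin p) (Fin m) A) (x : Fin m → N) : Fin p → N :=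
  fun k => ∑ i, V k i • x i

section KerRange

open CharacterModule

variable {R B C D : Type*} [CommRing R] [AddCommGroup B] [Module R B] [AddCommGroup C] [Module R C]
  [AddCommGroup D] [Module R D]

theorem exists_dual_eq_of_forall_mem_ker (g : C →ₗ[R] D) (c : CharacterModule C)
    (hc : ∀ x ∈ LinearMap.ker g, c x = 0) : ∃ d, dual g d = c := by
  let cBar : CharacterModule (C ⧸ LinearMap.ker g) :=
    QuotientAddGroup.lift (LinearMap.ker g).toAddSubgroup c hc
  have hg : Function.Injective ((LinearMap.ker g).liftQ g le_rfl) :=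
    LinearMap.ker_eq_bot.mp (Submodule.ker_liftQ_eq_bot' _ g rfl)
  obtain ⟨d, hd⟩ := dual_surjective_of_injective _ hg cBar
  exact ⟨d, CharacterModule.ext _ fun x ↦ DFunLike.congr_fun hd (Submodule.Quotient.mk x)⟩

theorem mem_of_forall_character_apply_eq_zero (S : Submodule R C) {x : C}
    (hx : ∀ c : CharacterModule C, (∀ y ∈ S, c y = 0) → c x = 0) : x ∈ S := by
  rw [← Submodule.Quotient.mk_eq_zero]
  refine eq_zero_of_character_apply fun c ↦ hx (dual S.mkQ c) fun y hy ↦ ?_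
  exact (congrArg c ((Submodule.Quotient.mk_eq_zero S).mpr hy)).trans (map_zero c)

theorem ker_le_range_iff_ker_dual_le_range_dual (f : B →ₗ[R] C) (g : C →ₗ[R] D) :
    LinearMap.ker g ≤ LinearMap.range f ↔
      LinearMap.ker (dual f) ≤ LinearMap.range (dual g) := by
  constructor
  · intro h c hc
    refine exists_dual_eq_of_forall_mem_ker g c fun x hx ↦ ?_
    obtain ⟨b, rfl⟩ := h hx
    exact DFunLike.congr_fun hc b
  · intro h x hx
    refine mem_of_forall_character_apply_eq_zero _ fun c hc ↦ ?_
    have hcf : dual f c = 0 := CharacterModule.ext _ fun b ↦ hc _ ⟨b, rfl⟩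
    obtain ⟨d, rfl⟩ := h hcf
    exact (congrArg d hx).trans (map_zero d)

end KerRange

section Pi

variable {ι : Type*} [Fintype ι] [DecidableEq ι] {N : ι → Type*} [∀ i, AddCommGroup (N i)]

/-- A tuple of characters `f i` of the groups `N i` is the same as a character of their finite
product, namely `x ↦ ∑ i, f i (x i)`. -/
def characterModulePiEquiv :
    (∀ i, CharacterModule (N i)) ≃+ CharacterModule (∀ i, N i) where
  toFun f := AddMonoidHom.mk' (fun x ↦ ∑ i, f i (x i)) fun x y ↦ by
    simp only [Pi.add_apply, map_add, Finset.sum_add_distrib]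
  invFun c i := c.comp (AddMonoidHom.single N i)
  left_inv f := by
    ext i x
    change ∑ j, f j (Pi.single i x j) = f i x
    rw [Finset.sum_eq_single_of_mem i (Finset.mem_univ i), Pi.single_eq_same]
    intro j _ hj
    rw [Pi.single_eq_of_ne hj, map_zero]
  right_inv c := by
    ext x
    change ∑ i, c (Pi.single i (x i)) = c x
    rw [← map_sum, Finset.univ_sum_single]
  map_add' _ _ := CharacterModule.ext _ fun _ ↦ Finset.sum_add_distrib

theorem characterModulePiEquiv_apply (f : ∀ i, CharacterModule (N i)) (x : ∀ i, N i) :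
    characterModulePiEquiv f x = ∑ i, f i (x i) :=
  rfl

end Pi

/-- The right `A`-module structure `(f · a) x = f (a • x)` on the character module of a left
`A`-module. It is local because an `Aᵐᵒᵖ`-action on `N` itself would, for commutative `A`, induce a
competing `Aᵐᵒᵖ`-action on the character module. -/
local instance characterModuleMulOpposite {A N : Type*} [Ring A] [AddCommGroup N] [Module A N] :
    Module Aᵐᵒᵖ (CharacterModule N) :=
  inferInstanceAs (Module Aᵈᵐᵃ (N →+ AddCircle (1 : ℚ)))

theorem op_smul_character_apply {A N : Type*} [Ring A] [AddCommGroup N] [Module A N]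
    (a : A) (c : CharacterModule N) (x : N) : (op a • c) x = c (a • x) :=
  rfl

section Matrix

variable {A : Type u} [Ring A] {M N : Type*} [AddCommGroup M] [Module Aᵐᵒᵖ M]
  [AddCommGroup N] [Module A N] {m n p : ℕ}

/-- Left multiplication of columns `x ∈ N ^ m` by `V`, as a homomorphism of abelian groups, encoded
as a `ℤ`-linear map to match `CharacterModule.dual`. -/
def matVecMulHom (V : Matrix (Fin p) (Fin m) A) : (Fin m → N) →ₗ[ℤ] (Fin p → N) :=
  (AddMonoidHom.mk' (matVecMul V) fun x y ↦ by
    ext k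
    simp only [matVecMul, Pi.add_apply, smul_add, Finset.sum_add_distrib]).toIntLinearMap

theorem dual_matVecMulHom_characterModulePiEquiv (U : Matrix (Fin m) (Fin n) A)
    (f : Fin m → CharacterModule N) :
    CharacterModule.dual (matVecMulHom U) (characterModulePiEquiv f) =
      characterModulePiEquiv (vecMulMat f U) := by
  ext y
  calc characterModulePiEquiv f (matVecMul U y)
      = ∑ i, ∑ j, f i (U i j • y j) := by
        simp only [characterModulePiEquiv_apply, matVecMul, map_sum]
    _ = ∑ j, ∑ i, (op (U i j) • f i) (y j) := by
        simp only [op_smul_character_apply]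
        exact Finset.sum_comm
    _ = ∑ j, vecMulMat f U j (y j) :=
        Finset.sum_congr rfl fun j _ ↦ (AddMonoidHom.finsetSum_apply _ _ (y j)).symm
    _ = characterModulePiEquiv (vecMulMat f U) y := (characterModulePiEquiv_apply _ y).symm

variable (M) in
/-- The right `A`-module `M` belongs to the class defined by the pair `(U, V)`. -/
def MemRightClass (U : Matrix (Fin m) (Fin n) A) (V : Matrix (Fin p) (Fin m) A) : Prop :=
  ∀ x : Fin m → M, vecMulMat x U = 0 → ∃ y : Fin p → M, x = vecMulMat y V

variable (N) in
/-- The left `A`-module `N` belongs to the class defined by the pair `(V, U)`. -/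
def MemLeftClass (V : Matrix (Fin p) (Fin m) A) (U : Matrix (Fin m) (Fin n) A) : Prop :=
  ∀ x : Fin m → N, matVecMul V x = 0 → ∃ y : Fin n → N, x = matVecMul U y

theorem memLeftClass_iff_memRightClass_characterModule (V : Matrix (Fin p) (Fin m) A)
    (U : Matrix (Fin m) (Fin n) A) :
    MemLeftClass N V U ↔ MemRightClass (CharacterModule N) U V :=
  calc MemLeftClass N V U
    _ ↔ LinearMap.ker (matVecMulHom (N := N) V) ≤ LinearMap.range (matVecMulHom U) :=
      forall₂_congr fun _ _ ↦ exists_congr fun _ ↦ eq_comm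
    _ ↔ ∀ c, CharacterModule.dual (matVecMulHom (N := N) U) c = 0 →
          ∃ d, c = CharacterModule.dual (matVecMulHom V) d :=
      (ker_le_range_iff_ker_dual_le_range_dual _ _).trans <|
        forall₂_congr fun _ _ ↦ exists_congr fun _ ↦ eq_comm
    _ ↔ MemRightClass (CharacterModule N) U V := by
      simp only [MemRightClass, characterModulePiEquiv.surjective.forall,
        characterModulePiEquiv.surjective.exists, dual_matVecMulHom_characterModulePiEquiv,
        EmbeddingLike.map_eq_zero_iff, EmbeddingLike.apply_eq_iff_eq]

end Matrix

/-- if the class of right `A`-modules defined by `(U_i, V_i)_{i ∈ I}` is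
contained in the class defined by `(U'_j, V'_j)_{j ∈ J}`, then the class of left
`A`-modules defined by the swapped family `(V_i, U_i)_{i ∈ I}` is contained in the class
of left `A`-modules defined by `(V'_j, U'_j)_{j ∈ J}`. -/
theorem stmt10 (A : Type u) [Ring A]
    {I : Type*} {m n p : I → ℕ}
    (U : ∀ i, Matrix (Fin (m i)) (Fin (n i)) A)
    (V : ∀ i, Matrix (Fin (p i)) (Fin (m i)) A)
    {J : Type*} {m' n' p' : J → ℕ}
    (U' : ∀ j, Matrix (Fin (m' j)) (Fin (n' j)) A)
    (V' : ∀ j, Matrix (Fin (p' j)) (Fin (m' j)) A)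
    (h : ∀ (M : Type u) [AddCommGroup M] [Module Aᵐᵒᵖ M],
      (∀ i (x : Fin (m i) → M), vecMulMat x (U i) = 0 →
          ∃ y : Fin (p i) → M, x = vecMulMat y (V i)) →
      (∀ j (x : Fin (m' j) → M), vecMulMat x (U' j) = 0 →
          ∃ y : Fin (p' j) → M, x = vecMulMat y (V' j))) :
    ∀ (N : Type u) [AddCommGroup N] [Module A N],
      (∀ i (x : Fin (m i) → N), matVecMul (V i) x = 0 →
          ∃ y : Fin (n i) → N, x = matVecMul (U i) y) →
      (∀ j (x : Fin (m' j) → N), matVecMul (V' j) x = 0 →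
          ∃ y : Fin (n' j) → N, x = matVecMul (U' j) y) := by
  intro N _ _ hN j
  exact (memLeftClass_iff_memRightClass_characterModule (V' j) (U' j)).mpr <|
    h (CharacterModule N)
      (fun i ↦ (memLeftClass_iff_memRightClass_characterModule (V i) (U i)).mp (hN i)) j
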